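/- arXiv:1807.06101 — 2 statements merged into one kernel-verified Lean document; each statement's English description precedes it below -/
import Mathlib

section
/- For every q ∈ (2, ∞) there exists a constant a = a(q) > 0 such that the following holds. Let G be a d-regular graph (d ≥ 1) on a finite vertex set V, identified with its normalized adjacency matrix, let λ ∈ (0, 1) and δ > 0. If Φ_G(δ) > 1 − a·λ^{2q}, then ‖P_{≥λ}(G)‖_{2→q} ≤ 2/√δ. -/
open Finset

/-- The expectation `r`-norm of a function on a finite vertex set:
`(E_{x ∈ V} |f x|^r)^{1/r}`. -/
noncomputable def eNorm {V : Type} [Fintype V] (r : ℝ) (f : V → ℝ) : ℝ :=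
  ((∑ x, |f x| ^ r) / (Fintype.card V : ℝ)) ^ (1 / r)

/-- The number of (ordered) edge endpoints leaving `S`: the number of pairs
`(u, v)` with `u ∈ S`, `v ∉ S` and `u ~ v`. -/
def eBoundary {V : Type} [Fintype V] [DecidableEq V] (G : SimpleGraph V)
    [DecidableRel G.Adj] (S : Finset V) : ℕ :=
  (Finset.univ.filter fun p : V × V => p.1 ∈ S ∧ p.2 ∉ S ∧ G.Adj p.1 p.2).card

/-- The span of the eigenvectors of the normalized adjacency matrix of `G` with
eigenvalue at least `lam`. -/
noncomputable def topEigenspace {V : Type} [Fintype V] [DecidableEq V]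
    (G : SimpleGraph V) [DecidableRel G.Adj] (dreg : ℕ) (lam : ℝ) :
    Submodule ℝ (V → ℝ) :=
  Submodule.span ℝ {f : V → ℝ | ∃ c : ℝ, lam ≤ c ∧
    ((dreg : ℝ)⁻¹ • G.adjMatrix ℝ).mulVec f = c • f}

open scoped Matrix

/-!
Let `W` be the span of the eigenvectors with eigenvalue at least `λ`, and let `f` maximize
`‖·‖_q / ‖·‖₂` on `W`. Since `A` is invertible on `W` with inverse of norm at most `1 / λ`, we
have `λ f = A k` for some `k ∈ W` with `‖k‖₂ ≤ ‖f‖₂`, and `‖k‖_q ≤ ‖f‖_q` by maximality. Put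
`h = max |f| |k|` and `θ = λ / 8`. Then `λ ‖f‖_q^q ≤ ⟨h^(q-1), A h⟩`, and a Young-type inequality
bounds `a^(q-1) b` by `θ (a^q + b^q) + θ^(1-q) min (a^q) (b^q)`, where the contribution of the
first term is absorbed by the left-hand side.

The sum of `A x y * min (h x ^ q) (h y ^ q)` is an integral of the weights inside the superlevel
sets of `h^q`. Those above height `r^q`, with `r ~ 1/√δ`, have measure at most `δ` by Markov's
inequality, so they keep at most the fraction `η = θ^q` of their weight, which is absorbed too.
The levels below `r^q` contribute at most `r^(q-2) ‖h‖₂²`. This gives `η ‖f‖_q^q ≤ r^(q-2) ‖f‖₂²`,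
which is the claim because an averaging argument forces `δ ≤ 2 η` as soon as `δ * |V| ≥ 4`;
smaller `δ` are covered by the trivial bound `‖f‖_q ≤ √|V| ‖f‖₂`.
-/

section ExpectationNorm

variable {V : Type} [Fintype V] {r : ℝ}

theorem eNorm_nonneg (r : ℝ) (f : V → ℝ) : 0 ≤ eNorm r f := by
  unfold eNorm
  positivity

theorem eNorm_smul (hr : 0 < r) (c : ℝ) (f : V → ℝ) : eNorm r (c • f) = |c| * eNorm r f := by
  have hsum : ∑ x, |(c • f) x| ^ r = |c| ^ r * ∑ x, |f x| ^ r := by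
    rw [mul_sum]
    refine sum_congr rfl fun x _ => ?_
    rw [Pi.smul_apply, smul_eq_mul, abs_mul, Real.mul_rpow (abs_nonneg _) (abs_nonneg _)]
  rw [eNorm, eNorm, hsum, mul_div_assoc, Real.mul_rpow (by positivity) (by positivity), one_div,
    Real.rpow_rpow_inv (abs_nonneg c) hr.ne']

theorem continuous_eNorm (hr : 0 < r) : Continuous (eNorm r : (V → ℝ) → ℝ) := by
  have hsum : Continuous fun f : V → ℝ => ∑ x, |f x| ^ r :=
    continuous_finsetSum _ fun x _ =>
      (continuous_apply x).abs.rpow_const fun _ => Or.inr hr.le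
  exact (hsum.div_const _).rpow_const fun _ => Or.inr (by positivity)

variable [Nonempty V]

theorem eNorm_le_iff (hr : 0 < r) {f : V → ℝ} {B : ℝ} (hB : 0 ≤ B) :
    eNorm r f ≤ B ↔ ∑ x, |f x| ^ r ≤ Fintype.card V * B ^ r := by
  have hV : (0 : ℝ) < Fintype.card V := by exact_mod_cast Fintype.card_pos
  rw [eNorm, one_div, Real.rpow_inv_le_iff_of_pos (by positivity) hB hr, div_le_iff₀' hV]

theorem card_mul_eNorm_rpow (hr : 0 < r) (f : V → ℝ) :
    Fintype.card V * eNorm r f ^ r = ∑ x, |f x| ^ r := by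
  have hV : (Fintype.card V : ℝ) ≠ 0 := by exact_mod_cast Fintype.card_ne_zero
  rw [eNorm, one_div, Real.rpow_inv_rpow (by positivity) hr.ne', mul_div_cancel₀ _ hV]

theorem eNorm_le_eNorm_iff (hr : 0 < r) {f g : V → ℝ} :
    eNorm r f ≤ eNorm r g ↔ ∑ x, |f x| ^ r ≤ ∑ x, |g x| ^ r := by
  rw [eNorm_le_iff hr (eNorm_nonneg r g), card_mul_eNorm_rpow hr]

theorem card_mul_eNorm_two_sq (f : V → ℝ) : Fintype.card V * eNorm 2 f ^ 2 = f ⬝ᵥ f := by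
  rw [← Real.rpow_two, card_mul_eNorm_rpow two_pos]
  simp only [Real.rpow_two, sq, abs_mul_abs_self, dotProduct]

theorem eNorm_two_le_eNorm_two_iff {f g : V → ℝ} :
    eNorm 2 f ≤ eNorm 2 g ↔ f ⬝ᵥ f ≤ g ⬝ᵥ g := by
  rw [eNorm_le_eNorm_iff two_pos]
  simp only [Real.rpow_two, sq, abs_mul_abs_self, dotProduct]

theorem eNorm_two_le_eNorm_two_of_sub_dotProduct_eq_zero {f u : V → ℝ}
    (h : (f - u) ⬝ᵥ u = 0) : eNorm 2 u ≤ eNorm 2 f := by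
  rw [eNorm_two_le_eNorm_two_iff]
  have hpyth : f ⬝ᵥ f = u ⬝ᵥ u + (f - u) ⬝ᵥ (f - u) := by
    simp only [sub_dotProduct, dotProduct_sub] at h ⊢
    linarith [dotProduct_comm f u]
  rw [hpyth]
  exact le_add_of_nonneg_right (sum_nonneg fun x _ => mul_self_nonneg _)

theorem abs_le_sqrt_card_mul_eNorm_two (f : V → ℝ) (x : V) :
    |f x| ≤ √(Fintype.card V) * eNorm 2 f := by
  rw [← Real.sqrt_sq (eNorm_nonneg 2 f), ← Real.sqrt_mul (Nat.cast_nonneg _),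
    card_mul_eNorm_two_sq]
  refine Real.abs_le_sqrt ?_
  rw [sq]
  exact single_le_sum (f := fun y => f y * f y) (fun y _ => mul_self_nonneg _) (mem_univ x)

theorem eNorm_two_eq_zero {f : V → ℝ} : eNorm 2 f = 0 ↔ f = 0 := by
  refine ⟨fun h => funext fun x => ?_, ?_⟩
  · simpa [h] using abs_le_sqrt_card_mul_eNorm_two f x
  · rintro rfl
    simpa using eNorm_smul two_pos 0 (0 : V → ℝ)

theorem eNorm_le_sqrt_card_mul_eNorm_two (hr : 0 < r) (f : V → ℝ) :
    eNorm r f ≤ √(Fintype.card V) * eNorm 2 f := by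
  rw [eNorm_le_iff hr (mul_nonneg (Real.sqrt_nonneg _) (eNorm_nonneg 2 f)), ← nsmul_eq_mul]
  refine sum_le_card_nsmul _ _ _ fun x _ => ?_
  gcongr
  exact abs_le_sqrt_card_mul_eNorm_two f x

theorem sum_max_abs_rpow_le (hr : 0 < r) {f k : V → ℝ} (h : eNorm r k ≤ eNorm r f) :
    ∑ x, max |f x| |k x| ^ r ≤ 2 * ∑ x, |f x| ^ r := by
  rw [eNorm_le_eNorm_iff hr] at h
  calc ∑ x, max |f x| |k x| ^ r ≤ ∑ x, (|f x| ^ r + |k x| ^ r) := by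
        gcongr with x
        have hf : 0 ≤ |f x| ^ r := by positivity
        have hk : 0 ≤ |k x| ^ r := by positivity
        rcases max_choice |f x| |k x| with hmax | hmax <;> rw [hmax] <;> linarith
    _ ≤ 2 * ∑ x, |f x| ^ r := by
        rw [sum_add_distrib]
        linarith

theorem exists_forall_eNorm_le_mul_eNorm_two (hr : 0 < r) {W : Submodule ℝ (V → ℝ)}
    (hW : W ≠ ⊥) :
    ∃ f ∈ W, eNorm 2 f = 1 ∧ ∀ g ∈ W, eNorm r g ≤ eNorm r f * eNorm 2 g := by
  let sphere : Set (V → ℝ) := {g | g ∈ W ∧ eNorm 2 g = 1}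
  have normalize_mem {g : V → ℝ} (hg : g ∈ W) (hg₀ : eNorm 2 g ≠ 0) :
      (eNorm 2 g)⁻¹ • g ∈ sphere :=
    ⟨W.smul_mem _ hg, by
      rw [eNorm_smul two_pos, abs_inv, abs_of_nonneg (eNorm_nonneg 2 g), inv_mul_cancel₀ hg₀]⟩
  have hclosed : IsClosed sphere :=
    W.closed_of_finiteDimensional.inter (isClosed_singleton.preimage (continuous_eNorm two_pos))
  have hbounded : Bornology.IsBounded sphere := by
    refine (Metric.isBounded_closedBall (x := 0) (r := √(Fintype.card V))).subset ?_
    rintro g ⟨-, hg⟩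
    rw [mem_closedBall_zero_iff, pi_norm_le_iff_of_nonneg (Real.sqrt_nonneg _)]
    intro x
    simpa [hg] using abs_le_sqrt_card_mul_eNorm_two g x
  obtain ⟨u, huW, hu⟩ := Submodule.exists_mem_ne_zero_of_ne_bot hW
  obtain ⟨f, ⟨hfW, hf⟩, hmax⟩ :=
    (Metric.isCompact_of_isClosed_isBounded hclosed hbounded).exists_isMaxOn
      ⟨_, normalize_mem huW (eNorm_two_eq_zero.not.2 hu)⟩ (continuous_eNorm hr).continuousOn
  refine ⟨f, hfW, hf, fun g hg => ?_⟩
  rcases (eNorm_nonneg 2 g).eq_or_lt' with hg₀ | hg₀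
  · have hgr := eNorm_le_sqrt_card_mul_eNorm_two hr g
    rwa [hg₀, mul_zero] at hgr ⊢
  · have hgr : eNorm r ((eNorm 2 g)⁻¹ • g) ≤ eNorm r f := hmax (normalize_mem hg hg₀.ne')
    rwa [eNorm_smul hr, abs_of_pos (inv_pos.2 hg₀), inv_mul_le_iff₀' hg₀] at hgr

end ExpectationNorm

section Spectral

theorem sum_dotProduct_sum_of_pairwise {V ι : Type*} [Fintype V] {s : Finset ι} {v : ι → V → ℝ}
    (h : (s : Set ι).Pairwise fun i j => v i ⬝ᵥ v j = 0) :
    (∑ i ∈ s, v i) ⬝ᵥ (∑ i ∈ s, v i) = ∑ i ∈ s, v i ⬝ᵥ v i := by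
  rw [sum_dotProduct]
  refine sum_congr rfl fun i hi => ?_
  rw [dotProduct_sum]
  exact sum_eq_single_of_mem i hi fun j hj hji => h hi hj hji.symm

variable {V : Type*} [Fintype V] {A : Matrix V V ℝ}

theorem dotProduct_eq_zero_of_mulVec_eq_smul (hA : A.IsSymm) {a b : ℝ} {v w : V → ℝ}
    (hv : A *ᵥ v = a • v) (hw : A *ᵥ w = b • w) (hab : a ≠ b) : v ⬝ᵥ w = 0 := by
  have hadj : (A *ᵥ v) ⬝ᵥ w = v ⬝ᵥ (A *ᵥ w) := by
    rw [Matrix.dotProduct_mulVec, ← Matrix.mulVec_transpose, hA.eq]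
  rw [hv, hw, smul_dotProduct, dotProduct_smul] at hadj
  exact (mul_eq_mul_right_iff.1 hadj).resolve_left hab

/-- The span of the eigenvectors of `A` with eigenvalue at least `lam`, i.e. the range of the
spectral projection `P_{≥ lam}(A)` when `A` is symmetric. -/
def spectralSubspace (A : Matrix V V ℝ) (lam : ℝ) : Submodule ℝ (V → ℝ) :=
  Submodule.span ℝ {f | ∃ c : ℝ, lam ≤ c ∧ A *ᵥ f = c • f}

theorem mem_spectralSubspace_of_mulVec_eq_smul {lam c : ℝ} {f : V → ℝ} (hc : lam ≤ c)
    (hf : A *ᵥ f = c • f) : f ∈ spectralSubspace A lam :=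
  Submodule.subset_span ⟨c, hc, hf⟩

theorem exists_sum_eigenvectors_of_mem_spectralSubspace {lam : ℝ} {f : V → ℝ}
    (hf : f ∈ spectralSubspace A lam) :
    ∃ v : Set.Ici lam →₀ (V → ℝ),
      (∀ c, A *ᵥ v c = (c : ℝ) • v c) ∧ ∑ c ∈ v.support, v c = f := by
  refine (Submodule.mem_iSup_iff_exists_finsupp
    (fun c : Set.Ici lam => Module.End.eigenspace A.mulVecLin c) f).1 ?_ |>.imp
      fun v hv => ⟨fun c => Module.End.mem_eigenspace_iff.1 (hv.1 c), hv.2⟩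
  refine Submodule.span_le.2 ?_ hf
  rintro g ⟨c, hc, hg⟩
  exact Submodule.mem_iSup_of_mem ⟨c, hc⟩ (Module.End.mem_eigenspace_iff.2 hg)

theorem exists_mulVec_eq_smul_of_mem_spectralSubspace (hA : A.IsSymm) {lam : ℝ} (hlam : 0 < lam)
    {f : V → ℝ} (hf : f ∈ spectralSubspace A lam) :
    ∃ k ∈ spectralSubspace A lam, A *ᵥ k = lam • f ∧ k ⬝ᵥ k ≤ f ⬝ᵥ f := by
  obtain ⟨v, hv, rfl⟩ := exists_sum_eigenvectors_of_mem_spectralSubspace hf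
  have hpos (c : Set.Ici lam) : (0 : ℝ) < c := hlam.trans_le c.2
  have horth (b : Set.Ici lam → ℝ) :
      (v.support : Set (Set.Ici lam)).Pairwise fun c c' => (b c • v c) ⬝ᵥ (b c' • v c') = 0 :=
    fun c _ c' _ hcc' => by
      change (b c • v c) ⬝ᵥ (b c' • v c') = 0
      rw [smul_dotProduct, dotProduct_smul, dotProduct_eq_zero_of_mulVec_eq_smul hA (hv c) (hv c')
        (Subtype.coe_injective.ne hcc'), smul_zero, smul_zero]
  refine ⟨∑ c ∈ v.support, (lam / c) • v c, ?_, ?_, ?_⟩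
  · exact Submodule.sum_mem _ fun c _ =>
      Submodule.smul_mem _ _ (mem_spectralSubspace_of_mulVec_eq_smul c.2 (hv c))
  · rw [Matrix.mulVec_sum, smul_sum]
    refine sum_congr rfl fun c _ => ?_
    rw [Matrix.mulVec_smul, hv, smul_smul, div_mul_cancel₀ _ (hpos c).ne']
  · rw [sum_dotProduct_sum_of_pairwise (horth fun c => lam / c),
      sum_dotProduct_sum_of_pairwise (by simpa using horth 1)]
    refine sum_le_sum fun c _ => ?_
    have hratio : lam / c ≤ 1 := (div_le_one (hpos c)).2 c.2
    have hratio₀ : 0 ≤ lam / c := (div_pos hlam (hpos c)).le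
    rw [smul_dotProduct, dotProduct_smul, smul_smul, smul_eq_mul]
    exact mul_le_of_le_one_left (sum_nonneg fun x _ => mul_self_nonneg _)
      (mul_le_one₀ hratio hratio₀ hratio)

end Spectral

section Density

variable {V : Type*}

theorem exists_mem_sub_two_mul_sum_le_sum_erase [DecidableEq V] {A : Matrix V V ℝ} {S : Finset V}
    (hS : S.Nonempty) (hA : ∀ x ∈ S, 0 ≤ A x x) :
    ∃ v ∈ S, ((#S : ℝ) - 2) * ∑ x ∈ S, ∑ y ∈ S, A x y ≤
      #S * ∑ x ∈ S.erase v, ∑ y ∈ S.erase v, A x y := by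
  refine exists_le_of_sum_le hS ?_
  have herase : ∀ v ∈ S, ∑ x ∈ S.erase v, ∑ y ∈ S.erase v, A x y =
      ∑ x ∈ S, ∑ y ∈ S, A x y - ∑ x ∈ S, A x v - ∑ y ∈ S, A v y + A v v := by
    intro v hv
    simp only [sum_erase_eq_sub hv, sum_sub_distrib]
    ring
  rw [← mul_sum, ← mul_sum, sum_congr rfl herase, sum_const, nsmul_eq_mul]
  simp only [sum_add_distrib, sum_sub_distrib, sum_const, nsmul_eq_mul]
  rw [sum_comm (s := S) (t := S) (f := fun v x => A x v)]
  linarith [mul_nonneg (Nat.cast_nonneg (α := ℝ) #S) (sum_nonneg hA)]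

variable [Fintype V]

theorem exists_card_eq_mul_sum_le_mul_sum {A : Matrix V V ℝ} (hA : ∀ x, 0 ≤ A x x) {k : ℕ}
    (hk : 2 ≤ k) (hkV : k ≤ Fintype.card V) :
    ∃ S : Finset V, #S = k ∧
      (k : ℝ) * (k - 1) * ∑ x, ∑ y, A x y ≤
        Fintype.card V * (Fintype.card V - 1) * ∑ x ∈ S, ∑ y ∈ S, A x y := by
  classical
  refine Nat.decreasingInduction' (fun j _ hkj ⟨S, hSj, hS⟩ => ?_) hkV ⟨univ, card_univ, le_rfl⟩
  obtain ⟨v, hv, hSv⟩ :=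
    exists_mem_sub_two_mul_sum_le_sum_erase (card_pos.1 (by omega)) fun x (_ : x ∈ S) => hA x
  refine ⟨S.erase v, by rw [card_erase_of_mem hv, hSj, Nat.add_sub_cancel], ?_⟩
  have hj : (2 : ℝ) ≤ j := by exact_mod_cast hk.trans hkj
  have hV : (1 : ℝ) ≤ Fintype.card V := by exact_mod_cast (show 1 ≤ Fintype.card V by omega)
  rw [hSj] at hSv
  push_cast at hS hSv
  refine le_of_mul_le_mul_left ?_ (show (0 : ℝ) < j + 1 by linarith)
  calc ((j : ℝ) + 1) * (j * (j - 1) * ∑ x, ∑ y, A x y)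
      = (j - 1) * ((j + 1) * (j + 1 - 1) * ∑ x, ∑ y, A x y) := by ring
    _ ≤ (j - 1) * (Fintype.card V * (Fintype.card V - 1) * ∑ x ∈ S, ∑ y ∈ S, A x y) := by
        gcongr
        linarith
    _ = Fintype.card V * (Fintype.card V - 1) * ((j + 1 - 2) * ∑ x ∈ S, ∑ y ∈ S, A x y) := by
        ring
    _ ≤ Fintype.card V * (Fintype.card V - 1) *
          ((j + 1) * ∑ x ∈ S.erase v, ∑ y ∈ S.erase v, A x y) := by
        gcongr
    _ = _ := by ring

/-- Every set of at most `δ * |V|` vertices keeps at most the fraction `η` of its weight inside.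
For a stochastic matrix `A` this says `1 - η ≤ Φ(S)` for all `S` with `μ(S) ≤ δ`, in a form which
is also meaningful for the empty set. -/
def SmallSetDensityLE (A : Matrix V V ℝ) (δ η : ℝ) : Prop :=
  ∀ S : Finset V, (#S : ℝ) ≤ δ * Fintype.card V → ∑ x ∈ S, ∑ y ∈ S, A x y ≤ η * #S

theorem sum_sum_of_mem_doublyStochastic [DecidableEq V] {A : Matrix V V ℝ}
    (hA : A ∈ doublyStochastic ℝ V) : ∑ x, ∑ y, A x y = Fintype.card V := by
  simp [sum_row_of_mem_doublyStochastic hA]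

theorem SmallSetDensityLE.lt_one [DecidableEq V] [Nonempty V] {A : Matrix V V ℝ}
    (hA : A ∈ doublyStochastic ℝ V) {δ η : ℝ} (h : SmallSetDensityLE A δ η) (hη : η < 1) :
    δ < 1 := by
  have hV : (0 : ℝ) < Fintype.card V := by exact_mod_cast Fintype.card_pos
  by_contra! hδ
  have huniv := h univ (by rw [card_univ]; exact le_mul_of_one_le_left hV.le hδ)
  rw [sum_sum_of_mem_doublyStochastic hA, card_univ] at huniv
  exact huniv.not_gt (mul_lt_of_lt_one_left hV hη)

/-- Some set of size `⌊δ * |V|⌋` is at least as dense as the average one, which has density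
about `δ`. -/
theorem SmallSetDensityLE.le_two_mul [DecidableEq V] [Nonempty V] {A : Matrix V V ℝ}
    (hA : A ∈ doublyStochastic ℝ V) {δ η : ℝ} (h : SmallSetDensityLE A δ η) (hη : η < 1)
    (hδ : 4 ≤ δ * Fintype.card V) : δ ≤ 2 * η := by
  have hV : (0 : ℝ) < Fintype.card V := by exact_mod_cast Fintype.card_pos
  set k := ⌊δ * Fintype.card V⌋₊
  have hkδ : (k : ℝ) ≤ δ * Fintype.card V := Nat.floor_le (by linarith)
  have hδk : δ * Fintype.card V < k + 1 := Nat.lt_floor_add_one _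
  have hk : (4 : ℝ) ≤ k := by exact_mod_cast Nat.le_floor (n := 4) (by exact_mod_cast hδ)
  have hkV : (k : ℝ) ≤ Fintype.card V :=
    hkδ.trans (mul_le_of_le_one_left hV.le (h.lt_one hA hη).le)
  obtain ⟨S, hSk, hS⟩ :=
    exists_card_eq_mul_sum_le_mul_sum (A := A) (fun x => nonneg_of_mem_doublyStochastic hA)
      (show 2 ≤ k by exact_mod_cast (by linarith : (2 : ℝ) ≤ k)) (by exact_mod_cast hkV)
  have hSη := h S (by rwa [hSk])
  rw [hSk] at hSη
  have hratio : (k : ℝ) - 1 ≤ η * (Fintype.card V - 1) := by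
    refine le_of_mul_le_mul_left ?_ (show (0 : ℝ) < k * Fintype.card V by positivity)
    calc (k : ℝ) * Fintype.card V * (k - 1) = k * (k - 1) * ∑ x, ∑ y, A x y := by
          rw [sum_sum_of_mem_doublyStochastic hA]; ring
      _ ≤ Fintype.card V * (Fintype.card V - 1) * (η * k) :=
          hS.trans (mul_le_mul_of_nonneg_left hSη (mul_nonneg hV.le (by linarith)))
      _ = k * Fintype.card V * (η * (Fintype.card V - 1)) := by ring
  have hη₀ : 0 < η :=
    pos_of_mul_pos_left (hratio.trans_lt' (by linarith)) (by linarith)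
  refine le_of_mul_le_mul_right ?_ hV
  linarith

end Density

section LayerCake

theorem indicator_Ico_zero_min (a b t : ℝ) :
    (Set.Ico 0 (min a b)).indicator (1 : ℝ → ℝ) t =
      (Set.Ico 0 a).indicator 1 t * (Set.Ico 0 b).indicator 1 t := by
  rw [← Pi.mul_apply, ← Set.inter_indicator_one, Set.Ico_inter_Ico, sup_idem]

theorem integral_indicator_Ico_zero {a : ℝ} (ha : 0 ≤ a) :
    ∫ t, (Set.Ico 0 a).indicator (1 : ℝ → ℝ) t = a := by
  rw [MeasureTheory.integral_indicator_one measurableSet_Ico, Real.volume_real_Ico_of_le ha,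
    sub_zero]

theorem integrable_indicator_Ico (a b : ℝ) :
    MeasureTheory.Integrable ((Set.Ico a b).indicator (1 : ℝ → ℝ)) :=
  (MeasureTheory.integrable_indicator_iff measurableSet_Ico).2
    (MeasureTheory.integrableOn_const measure_Ico_lt_top.ne)

variable {V : Type*} [Fintype V]

theorem sum_mul_min_le_of_sum_le {A : Matrix V V ℝ} {κ : ℝ} {w : V → ℝ} (hw : ∀ x, 0 ≤ w x)
    (hA : ∀ S : Finset V, (∀ x ∈ S, 0 < w x) → ∑ x ∈ S, ∑ y ∈ S, A x y ≤ κ * #S) :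
    ∑ x, ∑ y, A x y * min (w x) (w y) ≤ κ * ∑ x, w x := by
  classical
  let level (x : V) : ℝ → ℝ := (Set.Ico 0 (w x)).indicator 1
  have hmin (x y : V) (t : ℝ) :
      (Set.Ico 0 (min (w x) (w y))).indicator (1 : ℝ → ℝ) t = level x t * level y t :=
    indicator_Ico_zero_min (w x) (w y) t
  have hlevel (t : ℝ) :
      ∑ x, ∑ y, A x y * (level x t * level y t) ≤ κ * ∑ x, level x t := by
    convert hA {x | t ∈ Set.Ico 0 (w x)} fun x hx => ?_ using 1
    · simp only [level, Set.indicator_apply, sum_filter, Pi.one_apply, mul_ite, mul_one, mul_zero]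
      refine sum_congr rfl fun x _ => ?_
      split_ifs <;> simp
    · simp [level, Set.indicator_apply]
    · have htx := (mem_filter.1 hx).2
      exact htx.1.trans_lt htx.2
  have hint (x y : V) : MeasureTheory.Integrable fun t => A x y * (level x t * level y t) := by
    simp only [← hmin]
    exact (integrable_indicator_Ico _ _).const_mul _
  calc ∑ x, ∑ y, A x y * min (w x) (w y)
      = ∫ t, ∑ x, ∑ y, A x y * (level x t * level y t) := by
        rw [MeasureTheory.integral_finsetSum _ fun x _ =>
          MeasureTheory.integrable_finsetSum _ fun y _ => hint x y]
        refine sum_congr rfl fun x _ => ?_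
        rw [MeasureTheory.integral_finsetSum _ fun y _ => hint x y]
        refine sum_congr rfl fun y _ => ?_
        simp only [← hmin, MeasureTheory.integral_const_mul]
        rw [integral_indicator_Ico_zero (le_min (hw x) (hw y))]
    _ ≤ ∫ t, κ * ∑ x, level x t :=
        MeasureTheory.integral_mono
          (MeasureTheory.integrable_finsetSum _ fun x _ =>
            MeasureTheory.integrable_finsetSum _ fun y _ => hint x y)
          ((MeasureTheory.integrable_finsetSum _ fun x _ =>
            integrable_indicator_Ico 0 (w x)).const_mul κ) hlevel
    _ = κ * ∑ x, w x := by
        rw [MeasureTheory.integral_const_mul, MeasureTheory.integral_finsetSum _ fun x _ =>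
          integrable_indicator_Ico 0 (w x)]
        simp only [integral_indicator_Ico_zero (hw _)]

theorem min_le_min_max_sub_add_min (a b c : ℝ) :
    min a b ≤ min (max (a - c) 0) (max (b - c) 0) + min a c := by
  grind

variable [DecidableEq V]

theorem sum_mul_min_le_add_sum_min {A : Matrix V V ℝ} (hA : A ∈ doublyStochastic ℝ V)
    {κ c : ℝ} (hκ : 0 ≤ κ) (hc : 0 ≤ c) {v : V → ℝ} (hv : ∀ x, 0 ≤ v x)
    (hdens : ∀ S : Finset V, (∀ x ∈ S, c < v x) → ∑ x ∈ S, ∑ y ∈ S, A x y ≤ κ * #S) :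
    ∑ x, ∑ y, A x y * min (v x) (v y) ≤ κ * ∑ x, v x + ∑ x, min (v x) c := by
  let w (x : V) : ℝ := max (v x - c) 0
  have hw : ∑ x, ∑ y, A x y * min (w x) (w y) ≤ κ * ∑ x, w x :=
    sum_mul_min_le_of_sum_le (fun x => le_max_right _ _) fun S hS =>
      hdens S fun x hx => by simpa [w] using hS x hx
  calc ∑ x, ∑ y, A x y * min (v x) (v y)
      ≤ ∑ x, ∑ y, A x y * (min (w x) (w y) + min (v x) c) := by
        gcongr with x _ y _
        · exact nonneg_of_mem_doublyStochastic hA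
        · exact min_le_min_max_sub_add_min _ _ _
    _ = ∑ x, ∑ y, A x y * min (w x) (w y) + ∑ x, min (v x) c := by
        simp only [mul_add, sum_add_distrib, ← sum_mul, sum_row_of_mem_doublyStochastic hA, one_mul]
    _ ≤ κ * ∑ x, v x + ∑ x, min (v x) c := by
        gcongr
        refine hw.trans ?_
        gcongr with x
        exact max_le (by linarith) (hv x)

end LayerCake

section Hypercontractive

theorem rpow_sub_one_mul {x q : ℝ} (hx : 0 ≤ x) (hq : q ≠ 0) : x ^ (q - 1) * x = x ^ q := by
  rw [← Real.rpow_add_one' hx (by simpa using hq), sub_add_cancel]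

theorem rpow_sub_two_mul_sq {x q : ℝ} (hx : 0 ≤ x) (hq : q ≠ 0) :
    x ^ (q - 2) * x ^ 2 = x ^ q := by
  rw [← Real.rpow_two, ← Real.rpow_add' hx (by simpa using hq), sub_add_cancel]

theorem rpow_sub_one_le_self {q θ : ℝ} (hq : 2 ≤ q) (hθ₀ : 0 < θ) (hθ₁ : θ ≤ 1) :
    θ ^ (q - 1) ≤ θ := by
  simpa using Real.rpow_le_rpow_of_exponent_ge hθ₀ hθ₁ (by linarith : (1 : ℝ) ≤ q - 1)

theorem rpow_sub_one_mul_le_rpow_mul_min {q θ a b : ℝ} (hq : 2 ≤ q) (hθ₀ : 0 < θ) (hθ₁ : θ ≤ 1)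
    (ha : 0 ≤ a) (hb : 0 ≤ b) (hab : θ * b ≤ a) (hba : θ * a ≤ b) :
    a ^ (q - 1) * b ≤ θ ^ (1 - q) * min (a ^ q) (b ^ q) := by
  have hq₀ : q ≠ 0 := by linarith
  have hq₁ : 0 ≤ q - 1 := by linarith
  have hinv : θ ^ (1 - q) * θ ^ (q - 1) = 1 := by rw [← Real.rpow_add hθ₀]; simp
  rw [mul_min_of_nonneg _ _ (by positivity)]
  refine le_min ?_ ?_
  · calc a ^ (q - 1) * b = θ ^ (1 - q) * a ^ (q - 1) * (θ ^ (q - 1) * b) := by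
          linear_combination -(a ^ (q - 1) * b) * hinv
      _ ≤ θ ^ (1 - q) * a ^ (q - 1) * a := by
          gcongr
          exact (mul_le_mul_of_nonneg_right (rpow_sub_one_le_self hq hθ₀ hθ₁) hb).trans hab
      _ = θ ^ (1 - q) * a ^ q := by rw [mul_assoc, rpow_sub_one_mul ha hq₀]
  · calc a ^ (q - 1) * b = θ ^ (1 - q) * (θ * a) ^ (q - 1) * b := by
          rw [Real.mul_rpow hθ₀.le ha, ← mul_assoc, hinv, one_mul]
      _ ≤ θ ^ (1 - q) * b ^ (q - 1) * b := by gcongr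
      _ = θ ^ (1 - q) * b ^ q := by rw [mul_assoc, rpow_sub_one_mul hb hq₀]

theorem rpow_sub_one_mul_le {q θ a b : ℝ} (hq : 2 ≤ q) (hθ₀ : 0 < θ) (hθ₁ : θ ≤ 1) (ha : 0 ≤ a)
    (hb : 0 ≤ b) :
    a ^ (q - 1) * b ≤ θ * (a ^ q + b ^ q) + θ ^ (1 - q) * min (a ^ q) (b ^ q) := by
  have hq₀ : q ≠ 0 := by linarith
  have hq₁ : 0 ≤ q - 1 := by linarith
  have haq : 0 ≤ θ * a ^ q := by positivity
  have hbq : 0 ≤ θ * b ^ q := by positivity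
  have hmin : 0 ≤ θ ^ (1 - q) * min (a ^ q) (b ^ q) := by positivity
  rcases le_total b (θ * a) with hba | hba
  · have : a ^ (q - 1) * b ≤ θ * a ^ q := by
      calc a ^ (q - 1) * b ≤ a ^ (q - 1) * (θ * a) := by gcongr
        _ = θ * a ^ q := by rw [mul_left_comm, rpow_sub_one_mul ha hq₀]
    linarith
  rcases le_total a (θ * b) with hab | hab
  · have : a ^ (q - 1) * b ≤ θ * b ^ q := by
      calc a ^ (q - 1) * b ≤ (θ * b) ^ (q - 1) * b := by gcongr
        _ = θ ^ (q - 1) * b ^ q := by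
          rw [Real.mul_rpow hθ₀.le hb, mul_assoc, rpow_sub_one_mul hb hq₀]
        _ ≤ θ * b ^ q := by
          gcongr
          exact rpow_sub_one_le_self hq hθ₀ hθ₁
    linarith
  linarith [rpow_sub_one_mul_le_rpow_mul_min hq hθ₀ hθ₁ ha hb hab hba]

theorem min_rpow_le_rpow_sub_two_mul_sq {q a r : ℝ} (hq : 2 ≤ q) (ha : 0 ≤ a) (hr : 0 ≤ r) :
    min (a ^ q) (r ^ q) ≤ r ^ (q - 2) * a ^ 2 := by
  rcases le_total a r with har | hra
  · refine (min_le_left _ _).trans ?_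
    rw [← rpow_sub_two_mul_sq ha (by linarith)]
    gcongr
  · refine (min_le_right _ _).trans ?_
    rw [← rpow_sub_two_mul_sq hr (by linarith)]
    gcongr

variable {V : Type*} [Fintype V]

theorem card_le_of_sum_sq_le {h : V → ℝ} {r B : ℝ} (hr : 0 < r) (hB : ∑ x, h x ^ 2 ≤ B * r ^ 2)
    {S : Finset V} (hS : ∀ x ∈ S, r ≤ h x) : (#S : ℝ) ≤ B := by
  refine le_of_mul_le_mul_right (le_trans ?_ hB) (pow_pos hr 2)
  calc (#S : ℝ) * r ^ 2 ≤ ∑ x ∈ S, h x ^ 2 := by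
        rw [← nsmul_eq_mul]
        exact card_nsmul_le_sum _ _ _ fun x hx => pow_le_pow_left₀ hr.le (hS x hx) 2
    _ ≤ ∑ x, h x ^ 2 := sum_le_univ_sum_of_nonneg fun x => sq_nonneg _

theorem mul_sum_abs_rpow_le_of_mulVec_eq_smul {A : Matrix V V ℝ}
    (hA : ∀ x y, 0 ≤ A x y) {lam : ℝ} (hlam : 0 ≤ lam) {f k : V → ℝ}
    (hk : A *ᵥ k = lam • f) {q : ℝ} (hq : q ≠ 0) :
    lam * ∑ x, |f x| ^ q ≤ ∑ x, ∑ y, A x y * (|f x| ^ (q - 1) * |k y|) := by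
  have habs (x : V) : lam * |f x| ≤ ∑ y, A x y * |k y| := by
    calc lam * |f x| = |(A *ᵥ k) x| := by
          rw [hk, Pi.smul_apply, smul_eq_mul, abs_mul, abs_of_nonneg hlam]
      _ ≤ ∑ y, |A x y * k y| := abs_sum_le_sum_abs _ _
      _ = ∑ y, A x y * |k y| := by simp only [abs_mul, abs_of_nonneg (hA _ _)]
  rw [mul_sum]
  gcongr with x
  calc lam * |f x| ^ q = |f x| ^ (q - 1) * (lam * |f x|) := by
        rw [mul_left_comm, rpow_sub_one_mul (abs_nonneg _) hq]
    _ ≤ |f x| ^ (q - 1) * ∑ y, A x y * |k y| := by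
        gcongr
        exact habs x
    _ = ∑ y, A x y * (|f x| ^ (q - 1) * |k y|) := by
        simp only [mul_sum, mul_left_comm (|f x| ^ (q - 1))]

variable [DecidableEq V] {A : Matrix V V ℝ}

theorem SmallSetDensityLE.sum_mul_min_rpow_le (hA : A ∈ doublyStochastic ℝ V) {δ η : ℝ}
    (hdens : SmallSetDensityLE A δ η) (hη : 0 ≤ η) {q r : ℝ} (hq : 2 ≤ q) (hr : 0 < r)
    {h : V → ℝ} (hh : ∀ x, 0 ≤ h x) (hsum : ∑ x, h x ^ 2 ≤ δ * Fintype.card V * r ^ 2) :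
    ∑ x, ∑ y, A x y * min (h x ^ q) (h y ^ q) ≤
      η * ∑ x, h x ^ q + r ^ (q - 2) * ∑ x, h x ^ 2 := by
  have hq₀ : 0 < q := by linarith
  have hlevel : ∀ S : Finset V, (∀ x ∈ S, r ^ q < h x ^ q) →
      ∑ x ∈ S, ∑ y ∈ S, A x y ≤ η * #S := fun S hS =>
    hdens S <| card_le_of_sum_sq_le hr hsum fun x hx =>
      ((Real.rpow_lt_rpow_iff hr.le (hh x) hq₀).1 (hS x hx)).le
  refine (sum_mul_min_le_add_sum_min hA hη (Real.rpow_nonneg hr.le q)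
    (fun x => Real.rpow_nonneg (hh x) q) hlevel).trans ?_
  rw [mul_sum _ _ (r ^ (q - 2))]
  gcongr with x
  exact min_rpow_le_rpow_sub_two_mul_sq hq (hh x) hr.le

theorem sum_mul_add_of_mem_doublyStochastic (hA : A ∈ doublyStochastic ℝ V) (v : V → ℝ) :
    ∑ x, ∑ y, A x y * (v x + v y) = 2 * ∑ x, v x := by
  have hrow : ∑ x, ∑ y, A x y * v x = ∑ x, v x := by
    simp only [← sum_mul, sum_row_of_mem_doublyStochastic hA, one_mul]
  have hcol : ∑ x, ∑ y, A x y * v y = ∑ y, v y := by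
    rw [sum_comm]
    simp only [← sum_mul, sum_col_of_mem_doublyStochastic hA, one_mul]
  simp only [mul_add, sum_add_distrib]
  rw [hrow, hcol, two_mul]

theorem SmallSetDensityLE.sum_mul_rpow_mul_le (hA : A ∈ doublyStochastic ℝ V) {δ η : ℝ}
    (hdens : SmallSetDensityLE A δ η) (hη : 0 ≤ η) {q r θ : ℝ} (hq : 2 ≤ q) (hr : 0 < r)
    (hθ₀ : 0 < θ) (hθ₁ : θ ≤ 1) {h : V → ℝ} (hh : ∀ x, 0 ≤ h x)
    (hsum : ∑ x, h x ^ 2 ≤ δ * Fintype.card V * r ^ 2) :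
    ∑ x, ∑ y, A x y * (h x ^ (q - 1) * h y) ≤
      2 * θ * ∑ x, h x ^ q +
        θ ^ (1 - q) * (η * ∑ x, h x ^ q + r ^ (q - 2) * ∑ x, h x ^ 2) := by
  calc ∑ x, ∑ y, A x y * (h x ^ (q - 1) * h y)
      ≤ ∑ x, ∑ y, A x y *
          (θ * (h x ^ q + h y ^ q) + θ ^ (1 - q) * min (h x ^ q) (h y ^ q)) := by
        gcongr with x _ y _
        · exact nonneg_of_mem_doublyStochastic hA
        · exact rpow_sub_one_mul_le hq hθ₀ hθ₁ (hh x) (hh y)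
    _ = θ * ∑ x, ∑ y, A x y * (h x ^ q + h y ^ q) +
          θ ^ (1 - q) * ∑ x, ∑ y, A x y * min (h x ^ q) (h y ^ q) := by
        simp only [mul_add, mul_left_comm (A _ _), sum_add_distrib, mul_sum]
    _ ≤ _ := by
        rw [sum_mul_add_of_mem_doublyStochastic hA fun x => h x ^ q, mul_left_comm, ← mul_assoc]
        gcongr
        exact hdens.sum_mul_min_rpow_le hA hη hq hr hh hsum

end Hypercontractive

section Projection

variable {V : Type} [Fintype V] [DecidableEq V] [Nonempty V] {A : Matrix V V ℝ} {δ q : ℝ}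

theorem SmallSetDensityLE.rpow_mul_sum_abs_rpow_le (hA : A ∈ doublyStochastic ℝ V)
    (hδ₀ : 0 < δ) {θ : ℝ} (hθ₀ : 0 < θ) (hθ₁ : θ ≤ 1) (hdens : SmallSetDensityLE A δ (θ ^ q))
    (hq : 2 ≤ q) {f k : V → ℝ} (hk : A *ᵥ k = (8 * θ) • f) (hf : eNorm 2 f = 1)
    (hk₂ : eNorm 2 k ≤ eNorm 2 f) (hkq : eNorm q k ≤ eNorm q f) :
    θ ^ q * ∑ x, |f x| ^ q ≤ √(2 / δ) ^ (q - 2) * Fintype.card V := by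
  have hq₀ : 0 < q := by linarith
  let h (x : V) : ℝ := max |f x| |k x|
  have hh (x : V) : 0 ≤ h x := (abs_nonneg _).trans (le_max_left _ _)
  have hhq : ∑ x, h x ^ q ≤ 2 * ∑ x, |f x| ^ q := sum_max_abs_rpow_le hq₀ hkq
  have hh₂ : ∑ x, h x ^ 2 ≤ 2 * Fintype.card V := by
    have hmax := sum_max_abs_rpow_le two_pos hk₂
    rw [← card_mul_eNorm_rpow two_pos, hf, Real.one_rpow, mul_one] at hmax
    simpa only [Real.rpow_two] using hmax
  have hmarkov : ∑ x, h x ^ 2 ≤ δ * Fintype.card V * √(2 / δ) ^ 2 := by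
    refine hh₂.trans_eq ?_
    rw [Real.sq_sqrt (by positivity)]
    field_simp
  have hmain : 8 * θ * ∑ x, |f x| ^ q ≤ 2 * θ * (2 * ∑ x, |f x| ^ q) + θ ^ (1 - q) *
      (θ ^ q * (2 * ∑ x, |f x| ^ q) + √(2 / δ) ^ (q - 2) * (2 * Fintype.card V)) := by
    calc 8 * θ * ∑ x, |f x| ^ q
        ≤ ∑ x, ∑ y, A x y * (|f x| ^ (q - 1) * |k y|) :=
          mul_sum_abs_rpow_le_of_mulVec_eq_smul
            (fun _ _ => nonneg_of_mem_doublyStochastic hA) (by positivity) hk hq₀.ne'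
      _ ≤ ∑ x, ∑ y, A x y * (h x ^ (q - 1) * h y) := by
          gcongr with x _ y _
          · exact nonneg_of_mem_doublyStochastic hA
          · linarith
          · exact le_max_left _ _
          · exact le_max_right _ _
      _ ≤ 2 * θ * ∑ x, h x ^ q +
            θ ^ (1 - q) * (θ ^ q * ∑ x, h x ^ q + √(2 / δ) ^ (q - 2) * ∑ x, h x ^ 2) :=
          hdens.sum_mul_rpow_mul_le hA (by positivity) hq (by positivity) hθ₀ hθ₁ hh hmarkov
      _ ≤ _ := by gcongr
  have hθq : θ ^ (1 - q) * θ ^ q = θ := by rw [← Real.rpow_add hθ₀]; simp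
  refine le_of_mul_le_mul_left ?_ (show 0 < θ ^ (1 - q) by positivity)
  linear_combination (1 / 2) * hmain + 2 * (∑ x, |f x| ^ q) * hθq

theorem SmallSetDensityLE.eNorm_le_sqrt_two_div (hA : A ∈ doublyStochastic ℝ V)
    (hδ₀ : 0 < δ) {θ : ℝ} (hθ₀ : 0 < θ) (hθ₁ : θ ≤ 1) (hdens : SmallSetDensityLE A δ (θ ^ q))
    (hδθ : δ ≤ 2 * θ ^ q) (hq : 2 ≤ q) {f k : V → ℝ} (hk : A *ᵥ k = (8 * θ) • f)
    (hf : eNorm 2 f = 1) (hk₂ : eNorm 2 k ≤ eNorm 2 f) (hkq : eNorm q k ≤ eNorm q f) :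
    eNorm q f ≤ √(2 / δ) := by
  have hq₀ : 0 < q := by linarith
  rw [eNorm_le_iff hq₀ (Real.sqrt_nonneg _)]
  have hsq : δ / 2 * √(2 / δ) ^ 2 = 1 := by
    rw [Real.sq_sqrt (by positivity)]
    field_simp
  refine le_of_mul_le_mul_left ?_ (half_pos hδ₀)
  calc δ / 2 * ∑ x, |f x| ^ q ≤ θ ^ q * ∑ x, |f x| ^ q := by
        gcongr
        linarith
    _ ≤ √(2 / δ) ^ (q - 2) * Fintype.card V :=
        hdens.rpow_mul_sum_abs_rpow_le hA hδ₀ hθ₀ hθ₁ hq hk hf hk₂ hkq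
    _ = δ / 2 * (Fintype.card V * √(2 / δ) ^ q) := by
        rw [← rpow_sub_two_mul_sq (Real.sqrt_nonneg _) hq₀.ne']
        linear_combination -(√(2 / δ) ^ (q - 2) * Fintype.card V) * hsq

theorem SmallSetDensityLE.eNorm_le_of_mem_spectralSubspace (hA : A ∈ doublyStochastic ℝ V)
    (hsymm : A.IsSymm) (hδ : 0 < δ) {lam : ℝ} (hlam₀ : 0 < lam) (hlam₁ : lam ≤ 1)
    (hdens : SmallSetDensityLE A δ ((lam / 8) ^ q)) (hq : 2 ≤ q) {u : V → ℝ}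
    (hu : u ∈ spectralSubspace A lam) : eNorm q u ≤ 2 / √δ * eNorm 2 u := by
  have hq₀ : 0 < q := by linarith
  rcases le_or_gt (δ * Fintype.card V) 4 with hsmall | hlarge
  · refine (eNorm_le_sqrt_card_mul_eNorm_two hq₀ u).trans ?_
    gcongr
    · exact eNorm_nonneg 2 u
    rw [le_div_iff₀ (Real.sqrt_pos.2 hδ), ← Real.sqrt_mul (Nat.cast_nonneg _),
      Real.sqrt_le_left two_pos.le]
    linarith
  rcases eq_or_ne u 0 with rfl | hu₀
  · simpa [eNorm_two_eq_zero.2] using eNorm_le_sqrt_card_mul_eNorm_two hq₀ (0 : V → ℝ)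
  have hδη : δ ≤ 2 * (lam / 8) ^ q :=
    hdens.le_two_mul hA (Real.rpow_lt_one (by positivity) (by linarith) hq₀) hlarge.le
  obtain ⟨f, hfW, hf, hmax⟩ :=
    exists_forall_eNorm_le_mul_eNorm_two hq₀ ((Submodule.ne_bot_iff _).2 ⟨u, hu, hu₀⟩)
  obtain ⟨k, hkW, hk, hkf⟩ := exists_mulVec_eq_smul_of_mem_spectralSubspace hsymm hlam₀ hfW
  have hk₂ : eNorm 2 k ≤ eNorm 2 f := eNorm_two_le_eNorm_two_iff.2 hkf
  have hkq : eNorm q k ≤ eNorm q f :=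
    (hmax k hkW).trans (mul_le_of_le_one_right (eNorm_nonneg q f) (hk₂.trans_eq hf))
  have hfq : eNorm q f ≤ √(2 / δ) :=
    hdens.eNorm_le_sqrt_two_div hA hδ (by positivity) (by linarith) hδη hq
      (by rwa [mul_div_cancel₀ _ (by norm_num)]) hf hk₂ hkq
  have hconst : √(2 / δ) ≤ 2 / √δ := by
    rw [Real.sqrt_div zero_le_two]
    gcongr
    exact (Real.sqrt_le_left two_pos.le).2 (by norm_num)
  calc eNorm q u ≤ eNorm q f * eNorm 2 u := hmax u hu
    _ ≤ 2 / √δ * eNorm 2 u :=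
      mul_le_mul_of_nonneg_right (hfq.trans hconst) (eNorm_nonneg 2 u)

end Projection

section Expansion

/-- The expansion `Φ(S)` of a set `S` of vertices of the weighted graph `A`: the fraction of the
weight of `S` which leaves `S`. The empty set gets the value `0`, by division by zero. -/
noncomputable def edgeExpansion {V : Type*} [Fintype V] [DecidableEq V] (A : Matrix V V ℝ)
    (S : Finset V) : ℝ :=
  (∑ x ∈ S, ∑ y ∈ Sᶜ, A x y) / #S

theorem smallSetDensityLE_of_le_edgeExpansion {V : Type*} [Fintype V] [DecidableEq V] [Nonempty V]
    {A : Matrix V V ℝ} (hA : A ∈ doublyStochastic ℝ V) {δ η : ℝ}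
    (hexp : ∀ S : Finset V, S.Nonempty → (#S : ℝ) / Fintype.card V ≤ δ →
      1 - η ≤ edgeExpansion A S) :
    SmallSetDensityLE A δ η := by
  intro S hSδ
  rcases S.eq_empty_or_nonempty with rfl | hS
  · simp
  have hS₀ : (0 : ℝ) < #S := by exact_mod_cast hS.card_pos
  have hsplit : ∑ x ∈ S, ∑ y ∈ S, A x y + ∑ x ∈ S, ∑ y ∈ Sᶜ, A x y = #S := by
    simp only [← sum_add_distrib, sum_add_sum_compl, sum_row_of_mem_doublyStochastic hA,
      sum_const, nsmul_one]
  have hV : (0 : ℝ) < Fintype.card V := by exact_mod_cast Fintype.card_pos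
  have hSexp := hexp S hS ((div_le_iff₀ hV).2 hSδ)
  rw [edgeExpansion, le_div_iff₀ hS₀] at hSexp
  linarith

theorem stmt14_general {V : Type} [Fintype V] [DecidableEq V] [Nonempty V] {A : Matrix V V ℝ}
    (hA : A ∈ doublyStochastic ℝ V) (hsymm : A.IsSymm) {q lam δ : ℝ} (hq : 2 ≤ q)
    (hlam₀ : 0 < lam) (hlam₁ : lam ≤ 1) (hδ : 0 < δ)
    (hexp : ∀ S : Finset V, S.Nonempty → (#S : ℝ) / Fintype.card V ≤ δ →
      1 - (lam / 8) ^ q ≤ edgeExpansion A S)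
    {f u : V → ℝ} (hu : u ∈ spectralSubspace A lam) (hfu : (f - u) ⬝ᵥ u = 0) :
    eNorm q u ≤ 2 / √δ * eNorm 2 f := by
  have hdens := smallSetDensityLE_of_le_edgeExpansion hA hexp
  refine (hdens.eNorm_le_of_mem_spectralSubspace hA hsymm hδ hlam₀ hlam₁ hq hu).trans ?_
  gcongr
  exact eNorm_two_le_eNorm_two_of_sub_dotProduct_eq_zero hfu

end Expansion

section RegularGraph

variable {V : Type} [Fintype V] [DecidableEq V] {G : SimpleGraph V} [DecidableRel G.Adj]
  {d : ℕ}

theorem inv_smul_adjMatrix_mem_doublyStochastic (hd : 1 ≤ d) (hG : G.IsRegularOfDegree d) :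
    (d : ℝ)⁻¹ • G.adjMatrix ℝ ∈ doublyStochastic ℝ V := by
  have hd₀ : (d : ℝ) ≠ 0 := by positivity
  have hrow (x : V) : ∑ y, ((d : ℝ)⁻¹ • G.adjMatrix ℝ) x y = 1 := by
    have hdeg : ∑ y, G.adjMatrix ℝ x y = d := by
      simp [SimpleGraph.adjMatrix_apply, ← SimpleGraph.neighborFinset_eq_filter, hG.degree_eq x]
    simp only [Matrix.smul_apply, smul_eq_mul, ← mul_sum]
    rw [hdeg, inv_mul_cancel₀ hd₀]
  refine mem_doublyStochastic_iff_sum.2 ⟨fun x y => ?_, hrow, fun y => ?_⟩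
  · rw [Matrix.smul_apply, SimpleGraph.adjMatrix_apply]
    positivity
  · rw [← hrow y]
    simp [SimpleGraph.adjMatrix_apply, G.adj_comm]

theorem edgeExpansion_inv_smul_adjMatrix (S : Finset V) :
    edgeExpansion ((d : ℝ)⁻¹ • G.adjMatrix ℝ) S = eBoundary G S / (d * #S) := by
  have hboundary : ∑ x ∈ S, ∑ y ∈ Sᶜ, G.adjMatrix ℝ x y = eBoundary G S := by
    simp only [SimpleGraph.adjMatrix_apply]
    rw [← sum_product', sum_boole, eBoundary]
    congr 2
    ext p
    simp [and_assoc]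
  simp only [edgeExpansion, Matrix.smul_apply, smul_eq_mul, ← mul_sum]
  rw [hboundary, ← div_eq_inv_mul, div_div]

end RegularGraph

theorem eight_rpow_neg_mul_rpow_two_mul_le {q lam : ℝ} (hq : 0 ≤ q) (hlam₀ : 0 < lam)
    (hlam₁ : lam ≤ 1) : 8 ^ (-q) * lam ^ (2 * q) ≤ (lam / 8) ^ q := by
  rw [Real.div_rpow hlam₀.le (by norm_num), Real.rpow_neg (by norm_num), ← div_eq_inv_mul]
  gcongr ?_ / _
  exact Real.rpow_le_rpow_of_exponent_ge hlam₀ hlam₁ (by linarith)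

/-- For every `q ∈ (2, ∞)` there is `a = a(q) > 0` such that if every
nonempty set of measure at most `δ` has expansion greater than `1 − a·λ^{2q}`, then the
`2 → q` (expectation) norm of the projection `P_{≥λ}(G)` is at most `2/√δ`. -/
theorem stmt14 (q : ℝ) (hq : 2 < q) :
    ∃ a : ℝ, 0 < a ∧
      ∀ (V : Type) (_ : Fintype V) (_ : DecidableEq V) (_ : Nonempty V)
        (G : SimpleGraph V) (_ : DecidableRel G.Adj)
        (dreg : ℕ), 1 ≤ dreg → G.IsRegularOfDegree dreg →
      ∀ (lam δ : ℝ), 0 < lam → lam < 1 → 0 < δ →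
      ∀ P : (V → ℝ) →ₗ[ℝ] (V → ℝ),
        (∀ f, P f ∈ topEigenspace G dreg lam) →
        (∀ f ∈ topEigenspace G dreg lam, P f = f) →
        (∀ f : V → ℝ, ∀ g ∈ topEigenspace G dreg lam, ∑ x, (f x - P f x) * g x = 0) →
        (∀ S : Finset V, S.Nonempty → (S.card : ℝ) / (Fintype.card V : ℝ) ≤ δ →
          1 - a * lam ^ (2 * q) < (eBoundary G S : ℝ) / ((dreg : ℝ) * S.card)) →
        ∀ f : V → ℝ, eNorm q (P f) ≤ (2 / Real.sqrt δ) * eNorm 2 f := by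
  refine ⟨8 ^ (-q), by positivity, ?_⟩
  intro V _ _ _ G _ d hd hG lam δ hlam₀ hlam₁ hδ P hPmem _ hPorth hexp f
  refine stmt14_general (inv_smul_adjMatrix_mem_doublyStochastic hd hG)
    (G.isSymm_adjMatrix.smul _) hq.le hlam₀ hlam₁.le hδ (fun S hS hSδ => ?_) (hPmem f)
    (hPorth f _ (hPmem f))
  rw [edgeExpansion_inv_smul_adjMatrix]
  linarith [hexp S hS hSδ, eight_rpow_neg_mul_rpow_two_mul_le (by linarith : 0 ≤ q) hlam₀ hlam₁.le]
end

section
/- Let A ∈ {0,1}^{n×d}, k ≥ 1, ⟨·,·⟩ an inner product function, V ∈ {0,1}^{k×d}, and ε ∈ (0,1). Let t be an integer with t ≥ 2^{4k+14}/ε², and let α = (α_y) be a sequence of (ε/6)-approximate cluster sizes. Draw a random family C̃ = (C̃_y)_{y ∈ {0,1}^k} according to the distribution D(V,t): independently for each y ∈ {0,1}^k, if |C^V_y| < t set C̃_y = C^V_y, and otherwise let C̃_y be the multiset of t independent uniformly random samples (with replacement) from C^V_y. Let Ũ(C̃) be any matrix in {0,1}^{n×k}, depending on C̃, whose i-th row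 minimizes x ↦ Ẽ_{i,x} over x ∈ {0,1}^k, for each i. Then E_{C̃}[ ‖A − Ũ(C̃)·V‖₀ ] ≤ (1 + ε) · OPT_k^V. -/
open scoped Classical

/-- The `j`-th column of a `k × d` binary matrix. -/
def colOf {k d : ℕ} (V : Fin k → Fin d → Fin 2) (j : Fin d) : Fin k → Fin 2 :=
  fun l => V l j

/-- `‖A − U·V‖₀`: the number of positions `(i,j)` where `A i j ≠ ⟨U_{i,:}, V_{:,j}⟩`. -/
noncomputable def costUV {n d k : ℕ} (A : Fin n → Fin d → Fin 2)
    (ip : (Fin k → Fin 2) → (Fin k → Fin 2) → ℝ)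
    (U : Fin n → Fin k → Fin 2) (V : Fin k → Fin d → Fin 2) : ℕ :=
  Nat.card {p : Fin n × Fin d // ((A p.1 p.2 : ℕ) : ℝ) ≠ ip (U p.1) (colOf V p.2)}

/-- `OPT_k^V`: the minimum of `‖A − U·V‖₀` over all `U`. -/
noncomputable def optV {n d k : ℕ} (A : Fin n → Fin d → Fin 2)
    (ip : (Fin k → Fin 2) → (Fin k → Fin 2) → ℝ)
    (V : Fin k → Fin d → Fin 2) : ℕ :=
  sInf {c : ℕ | ∃ U : Fin n → Fin k → Fin 2, c = costUV A ip U V}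

/-- The cluster `C^V_y`: the set of columns of `V` equal to `y`. -/
def cluster {k d : ℕ} (V : Fin k → Fin d → Fin 2) (y : Fin k → Fin 2) : Finset (Fin d) :=
  Finset.univ.filter fun j => colOf V j = y

/-- The estimated cost `Ẽ_{i,x}` of row `i` and vector `x`, given approximate cluster
sizes `α` and a family of sampled multisets `Ct`.  (Division by zero is `0`, matching
the convention that a summand is `0` when `C^V_y = ∅`.) -/
noncomputable def estCost {n d k : ℕ} (A : Fin n → Fin d → Fin 2)
    (ip : (Fin k → Fin 2) → (Fin k → Fin 2) → ℝ)
    (α : (Fin k → Fin 2) → ℕ) (Ct : (Fin k → Fin 2) → Multiset (Fin d))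
    (i : Fin n) (x : Fin k → Fin 2) : ℝ :=
  ∑ y : Fin k → Fin 2, (α y : ℝ) / (Multiset.card (Ct y) : ℝ) *
    ((Multiset.filter (fun j => ((A i j : ℕ) : ℝ) ≠ ip x y) (Ct y)).card : ℝ)

/-- The multiset family `C̃` determined by a sampling function `σ`: for clusters of
size `< t` the whole cluster, otherwise the multiset of the `t` sampled columns. -/
noncomputable def sampleFam {k d : ℕ} (V : Fin k → Fin d → Fin 2) (t : ℕ)
    (σ : (Fin k → Fin 2) → Fin t → Fin d) (y : Fin k → Fin 2) : Multiset (Fin d) :=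
  if (cluster V y).card < t then (cluster V y).val
  else Multiset.map (σ y) (Finset.univ : Finset (Fin t)).val

/-- The probability of the sampling function `σ` under the distribution `D(V,t)`:
independently for each cluster of size `≥ t`, the `t` samples are independent and
uniform in `C^V_y` (coordinates of small clusters are irrelevant for `sampleFam` and
are given the uniform distribution on all columns). -/
noncomputable def sampleWeight {k d : ℕ} (V : Fin k → Fin d → Fin 2) (t : ℕ)
    (σ : (Fin k → Fin 2) → Fin t → Fin d) : ℝ :=
  ∏ y : Fin k → Fin 2, ∏ l : Fin t,
    if t ≤ (cluster V y).card then
      (if σ y l ∈ cluster V y then (((cluster V y).card : ℕ) : ℝ)⁻¹ else 0)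
    else (d : ℝ)⁻¹

/-!
Fix a row and a competitor `x'`, and write `R x` for the true cost of `x`. The estimated cost of `x`
minus that of `x'` is a mean, which is at least `R x - (1 + ε / 6) * R x'`, plus a centred noise
`S x`. Where `x` and `x'` predict different values on a cluster, every column is mismatched by at
least one of them, so there the difference of the mismatch indicators differs from `1` only on
columns mismatched by `x'`. Hence `𝔼 (S x) ^ 2` is at most a constant times
`(R x + R x') * R x' / t`. If `x` minimizes the estimate, then `R x ≤ (1 + ε / 6) * R x' - S x`, and
AM-GM splits `-S x` into a small multiple of `R x + R x'` and a multiple of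
`(S x) ^ 2 / (R x + R x')`. Bounding the latter by its sum over all labels makes the expectation
computable although the minimizer depends on the sample.
-/

open Finset

section ProductWeights

variable {ι τ κ R : Type*} [Fintype ι] [DecidableEq ι] [Fintype τ] [DecidableEq τ] [Fintype κ]
  [CommSemiring R] {w f : ι → κ → R}

lemma sum_prod_mul_mul_of_centered (hw : ∀ i, ∑ a, w i a = 1) (hf : ∀ i, ∑ a, w i a * f i a = 0)
    (i j : ι) :
    ∑ σ : ι → κ, (∏ m, w m (σ m)) * (f i (σ i) * f j (σ j)) =
      if i = j then ∑ a, w i a * f i a ^ 2 else 0 := by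
  have absorb (σ : ι → κ) : (∏ m, w m (σ m)) * (f i (σ i) * f j (σ j)) =
      ∏ m, w m (σ m) * ((if m = i then f m (σ m) else 1) * if m = j then f m (σ m) else 1) := by
    rw [prod_mul_distrib, prod_mul_distrib]
    simp
  simp_rw [absorb]
  rw [← Fintype.prod_sum fun m a =>
    w m a * ((if m = i then f m a else 1) * if m = j then f m a else 1)]
  split_ifs with hij
  · subst hij
    rw [Fintype.prod_eq_single i fun m hm => by simp [hm, hw]]
    simp [pow_two]
  · exact prod_eq_zero (mem_univ i) (by simp [hij, hf])

lemma sum_prod_mul_sum_sq (hw : ∀ i, ∑ a, w i a = 1) (hf : ∀ i, ∑ a, w i a * f i a = 0) :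
    ∑ σ : ι → κ, (∏ i, w i (σ i)) * (∑ i, f i (σ i)) ^ 2 = ∑ i, ∑ a, w i a * f i a ^ 2 := by
  simp_rw [pow_two (∑ i, f i _), sum_mul_sum, mul_sum]
  rw [sum_comm]
  refine sum_congr rfl fun i _ => ?_
  rw [sum_comm]
  simp [sum_prod_mul_mul_of_centered hw hf]

lemma sum_prod_prod_eq_one (hw : ∀ i, ∑ a, w i a = 1) :
    ∑ σ : ι → τ → κ, ∏ i, ∏ l, w i (σ i l) = 1 := by
  rw [← (Equiv.curry ι τ κ).sum_comp]
  simpa [Fintype.prod_prod_type, hw] using (Fintype.prod_sum fun p : ι × τ => w p.1).symm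

lemma sum_prod_prod_mul_sum_sum_sq (hw : ∀ i, ∑ a, w i a = 1)
    (hf : ∀ i, ∑ a, w i a * f i a = 0) :
    ∑ σ : ι → τ → κ, (∏ i, ∏ l, w i (σ i l)) * (∑ i, ∑ l, f i (σ i l)) ^ 2 =
      ∑ i, (Fintype.card τ : R) * ∑ a, w i a * f i a ^ 2 := by
  rw [← (Equiv.curry ι τ κ).sum_comp]
  simpa [Fintype.sum_prod_type, Fintype.prod_prod_type] using
    sum_prod_mul_sum_sq (fun p : ι × τ => hw p.1) (fun p => hf p.1)

end ProductWeights

section NoisyMinimizer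

variable {𝕜 : Type*} [Field 𝕜] [LinearOrder 𝕜] [IsStrictOrderedRing 𝕜]

lemma sub_le_of_add_noise_le {a r s δ θ : 𝕜} (ha : 0 ≤ a) (hr : 0 ≤ r) (hθ : 0 < θ)
    (h : a + s ≤ (1 + δ) * r) :
    (1 - θ / 2) * (a - r) ≤ (δ + θ) * r + s ^ 2 / (2 * θ * (a + r)) := by
  rcases (add_nonneg ha hr).eq_or_lt with h0 | hpos
  · obtain ⟨rfl, rfl⟩ : a = 0 ∧ r = 0 := by constructor <;> linarith
    simp
  · have amgm : -s ≤ θ * (a + r) / 2 + s ^ 2 / (2 * θ * (a + r)) := by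
      have hsq : 0 ≤ (θ * (a + r) + s) ^ 2 / (2 * θ * (a + r)) := by positivity
      have expand : (θ * (a + r) + s) ^ 2 / (2 * θ * (a + r)) =
          θ * (a + r) / 2 + s + s ^ 2 / (2 * θ * (a + r)) := by field_simp; ring
      linarith
    linarith

variable {Ω X : Type*} [Fintype Ω] [Fintype X]

lemma sum_weight_mul_minimizer_le {w : Ω → 𝕜} (hw0 : ∀ ω, 0 ≤ w ω) (hw1 : ∑ ω, w ω = 1)
    {a : X → 𝕜} (ha : ∀ x, 0 ≤ a x) {r δ θ v : 𝕜} (hr : 0 ≤ r) (hθ : 0 < θ) (hv : 0 ≤ v)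
    {S : X → Ω → 𝕜} (hS : ∀ x, ∑ ω, w ω * S x ω ^ 2 ≤ v * (a x + r) * r)
    {u : Ω → X} (hu : ∀ ω, w ω ≠ 0 → a (u ω) + S (u ω) ω ≤ (1 + δ) * r) :
    (1 - θ / 2) * (∑ ω, w ω * a (u ω) - r) ≤
      (δ + θ + Fintype.card X * (v / (2 * θ))) * r := by
  have pointwise (ω : Ω) : w ω * ((1 - θ / 2) * (a (u ω) - r)) ≤
      w ω * ((δ + θ) * r + ∑ x, S x ω ^ 2 / (2 * θ * (a x + r))) := by
    rcases eq_or_ne (w ω) 0 with h0 | hne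
    · simp [h0]
    have single : S (u ω) ω ^ 2 / (2 * θ * (a (u ω) + r)) ≤
        ∑ x, S x ω ^ 2 / (2 * θ * (a x + r)) :=
      single_le_sum (f := fun x => S x ω ^ 2 / (2 * θ * (a x + r)))
        (fun x _ => by have := ha x; positivity) (mem_univ (u ω))
    exact mul_le_mul_of_nonneg_left
      ((sub_le_of_add_noise_le (ha _) hr hθ (hu ω hne)).trans (by gcongr)) (hw0 ω)
  have noise (x : X) : (∑ ω, w ω * S x ω ^ 2) / (2 * θ * (a x + r)) ≤ v / (2 * θ) * r := by
    have := ha x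
    refine div_le_of_le_mul₀ (by positivity) (by positivity) ((hS x).trans_eq ?_)
    field_simp
  calc (1 - θ / 2) * (∑ ω, w ω * a (u ω) - r)
      = ∑ ω, w ω * ((1 - θ / 2) * (a (u ω) - r)) := by
        simp_rw [mul_left_comm (w _), ← mul_sum, mul_sub (w _), sum_sub_distrib, ← sum_mul, hw1,
          one_mul]
    _ ≤ ∑ ω, w ω * ((δ + θ) * r + ∑ x, S x ω ^ 2 / (2 * θ * (a x + r))) :=
        sum_le_sum fun ω _ => pointwise ω
    _ = (δ + θ) * r + ∑ x, (∑ ω, w ω * S x ω ^ 2) / (2 * θ * (a x + r)) := by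
        simp_rw [mul_add, sum_add_distrib, ← sum_mul, hw1, one_mul, mul_sum, sum_div, mul_div_assoc]
        rw [sum_comm]
    _ ≤ (δ + θ) * r + ∑ _x : X, v / (2 * θ) * r := by gcongr with x; exact noise x
    _ = (δ + θ + Fintype.card X * (v / (2 * θ))) * r := by
        rw [sum_const, card_univ, nsmul_eq_mul]
        ring

end NoisyMinimizer

section Mismatch

lemma sum_sq_sub_average_le {ι 𝕜 : Type*} [Field 𝕜] [LinearOrder 𝕜] [IsStrictOrderedRing 𝕜]
    (s : Finset ι) (f : ι → 𝕜) (m : 𝕜) :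
    ∑ j ∈ s, (f j - (∑ i ∈ s, f i) / #s) ^ 2 ≤ ∑ j ∈ s, (f j - m) ^ 2 := by
  rcases s.eq_empty_or_nonempty with rfl | hs
  · simp
  set μ := (∑ i ∈ s, f i) / #s with hμ
  have hsum : ∑ j ∈ s, f j = #s * μ := by
    rw [hμ, mul_div_cancel₀ _ (Nat.cast_ne_zero.2 hs.card_ne_zero)]
  have split : ∑ j ∈ s, (f j - m) ^ 2 = ∑ j ∈ s, (f j - μ) ^ 2 + #s * (μ - m) ^ 2 := by
    calc ∑ j ∈ s, (f j - m) ^ 2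
        = ∑ j ∈ s, ((f j - μ) ^ 2 + (2 * (μ - m) * f j + (m ^ 2 - μ ^ 2))) := by
          congr! 1 with j
          ring
      _ = ∑ j ∈ s, (f j - μ) ^ 2 + #s * (μ - m) ^ 2 := by
          rw [sum_add_distrib, sum_add_distrib, ← mul_sum, hsum, sum_const, nsmul_eq_mul]
          ring
  rw [split]
  exact le_add_of_nonneg_right (mul_nonneg (Nat.cast_nonneg _) (sq_nonneg _))

variable {J β : Type*} [DecidableEq β]

/-- The indicator of the columns whose entry in the row `a` differs from the prediction `b`. -/
def mismatch (a : J → β) (b : β) (j : J) : ℝ := if a j ≠ b then 1 else 0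

/-- The number `Z_{i,y,≠b}` of columns of a cluster `s` mismatched by the prediction `b`, where `a`
is row `i`. -/
def mismatchCount (s : Finset J) (a : J → β) (b : β) : ℕ := #{j ∈ s | a j ≠ b}

lemma sum_mismatch (s : Finset J) (a : J → β) (b : β) :
    ∑ j ∈ s, mismatch a b j = mismatchCount s a b := by
  simp only [mismatch, mismatchCount, sum_boole]

lemma mismatch_sub_mismatch_sub_one_sq_le (a : J → β) {b b' : β} (hb : b ≠ b') (j : J) :
    (mismatch a b j - mismatch a b' j - 1) ^ 2 ≤ 4 * mismatch a b' j := by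
  unfold mismatch
  split_ifs with h h' h' <;> norm_num
  exact hb ((not_not.mp h).symm.trans (not_not.mp h'))

lemma card_le_mismatchCount_add (s : Finset J) (a : J → β) {b b' : β} (hb : b ≠ b') :
    #s ≤ mismatchCount s a b + mismatchCount s a b' := by
  rw [mismatchCount, mismatchCount, ← card_filter_add_card_filter_not (s := s) (fun j => a j ≠ b)]
  gcongr with j
  exact fun h h' => hb (h'.symm.trans h)

lemma card_mul_sum_sq_mismatch_deviation_le (s : Finset J) (a : J → β) (b b' : β) :
    #s * ∑ j ∈ s, (mismatch a b j - mismatch a b' j -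
        ((mismatchCount s a b : ℝ) - mismatchCount s a b') / #s) ^ 2 ≤
      4 * (mismatchCount s a b + mismatchCount s a b') * mismatchCount s a b' := by
  rcases eq_or_ne b b' with rfl | hb
  · simp only [sub_self, zero_div, ne_eq, OfNat.ofNat_ne_zero, not_false_eq_true, zero_pow,
      sum_const_zero, mul_zero]
    positivity
  have variance : ∑ j ∈ s, (mismatch a b j - mismatch a b' j -
      ((mismatchCount s a b : ℝ) - mismatchCount s a b') / #s) ^ 2 ≤ 4 * mismatchCount s a b' :=
    calc _ ≤ ∑ j ∈ s, (mismatch a b j - mismatch a b' j - 1) ^ 2 := by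
          simpa only [sum_sub_distrib, sum_mismatch] using
            sum_sq_sub_average_le s (fun j => mismatch a b j - mismatch a b' j) 1
      _ ≤ ∑ j ∈ s, 4 * mismatch a b' j :=
          sum_le_sum fun j _ => mismatch_sub_mismatch_sub_one_sq_le a hb j
      _ = 4 * mismatchCount s a b' := by rw [← mul_sum, sum_mismatch]
  have hcard : (#s : ℝ) ≤ mismatchCount s a b + mismatchCount s a b' := by
    exact_mod_cast card_le_mismatchCount_add s a hb
  calc _ ≤ ((mismatchCount s a b : ℝ) + mismatchCount s a b') * (4 * mismatchCount s a b') := by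
        gcongr
    _ = _ := by ring

end Mismatch

section Clusters

variable {I J X Y β : Type*} [Fintype J] [DecidableEq Y]

/-- The cluster of the columns labelled `y`, for an arbitrary labelling `c` of the columns. For
`c = colOf V` this is `cluster V y`. -/
def labelClass (c : J → Y) (y : Y) : Finset J := {j | c j = y}

/-- The cost of giving the row `a` the label `x`: the number of columns `j` with
`a j ≠ ⟨x, c j⟩`. -/
def rowCost [DecidableEq β] (a : J → β) (ip : X → Y → β) (c : J → Y) (x : X) : ℕ :=
  #{j | a j ≠ ip x (c j)}

/-- The estimated cost `Ẽ_{i,x}`, where `a` is row `i`, for arbitrary label types; `S y` plays the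
role of `C̃_y`. -/
noncomputable def estimatedCost [Fintype Y] [DecidableEq β] (a : J → β) (ip : X → Y → β)
    (α : Y → ℝ) (S : Y → Multiset J) (x : X) : ℝ :=
  ∑ y, α y / (S y).card * ((S y).filter fun j => a j ≠ ip x y).card

/-- The family `C̃` given by the draws `σ`: small clusters are kept whole. -/
def sampledFamily (c : J → Y) (t : ℕ) (σ : Y → Fin t → J) (y : Y) : Multiset J :=
  if #(labelClass c y) < t then (labelClass c y).val else (univ : Finset (Fin t)).val.map (σ y)

/-- The probability that a single draw for the cluster of `y` is `j`. The draws for a small cluster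
do not influence `sampledFamily`; they are uniform on all columns. -/
noncomputable def drawWeight [DecidableEq J] (c : J → Y) (t : ℕ) (y : Y) (j : J) : ℝ :=
  if t ≤ #(labelClass c y) then if j ∈ labelClass c y then (#(labelClass c y) : ℝ)⁻¹ else 0
  else (Fintype.card J : ℝ)⁻¹

/-- The centred contribution of a draw `j` for the cluster of `y` to the difference between the
estimated costs of `x` and `x'`. -/
noncomputable def drawDeviation [DecidableEq β] (a : J → β) (ip : X → Y → β) (c : J → Y)
    (α : Y → ℝ) (t : ℕ) (x x' : X) (y : Y) (j : J) : ℝ :=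
  if t ≤ #(labelClass c y) then
    α y / t * (mismatch a (ip x y) j - mismatch a (ip x' y) j -
      ((mismatchCount (labelClass c y) a (ip x y) : ℝ) -
        mismatchCount (labelClass c y) a (ip x' y)) / #(labelClass c y))
  else 0

section RowCost

variable [DecidableEq β] (a : J → β) (ip : X → Y → β) (c : J → Y)

lemma rowCost_eq_sum_mismatchCount [Fintype Y] (x : X) :
    rowCost a ip c x = ∑ y, mismatchCount (labelClass c y) a (ip x y) := by
  rw [rowCost, card_eq_sum_card_fiberwise (f := c) (t := univ) fun _ _ => mem_coe.2 (mem_univ _)]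
  refine sum_congr rfl fun y _ => ?_
  rw [mismatchCount, labelClass, filter_comm, filter_filter, filter_filter]
  congr 1
  ext j
  simp +contextual

lemma mismatchCount_labelClass_le_rowCost (x : X) (y : Y) :
    mismatchCount (labelClass c y) a (ip x y) ≤ rowCost a ip c x := by
  refine card_le_card fun j hj => ?_
  obtain ⟨hcj, hmis⟩ : c j = y ∧ a j ≠ ip x y := by simpa [labelClass] using hj
  simpa [hcj] using hmis

lemma rowCost_sub_le_sum [Fintype Y] {δ : ℝ} {α : Y → ℝ}
    (hα : ∀ y, #(labelClass c y) ≤ α y ∧ α y ≤ (1 + δ) * #(labelClass c y)) (x x' : X) :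
    (rowCost a ip c x : ℝ) - (1 + δ) * rowCost a ip c x' ≤
      ∑ y, α y / #(labelClass c y) * ((mismatchCount (labelClass c y) a (ip x y) : ℝ) -
        mismatchCount (labelClass c y) a (ip x' y)) := by
  simp only [rowCost_eq_sum_mismatchCount, Nat.cast_sum, mul_sum, ← sum_sub_distrib]
  refine sum_le_sum fun y _ => ?_
  rcases (labelClass c y).eq_empty_or_nonempty with h | h
  · simp [h, mismatchCount]
  have hpos : (0 : ℝ) < #(labelClass c y) := by exact_mod_cast h.card_pos
  have lower : 1 ≤ α y / #(labelClass c y) := (one_le_div₀ hpos).2 (hα y).1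
  have upper : α y / #(labelClass c y) ≤ 1 + δ := (div_le_iff₀ hpos).2 (hα y).2
  rw [mul_sub]
  gcongr
  exact le_mul_of_one_le_left (Nat.cast_nonneg _) lower

end RowCost

section Sampling

variable {c : J → Y} {t : ℕ}

section DrawWeight

variable [DecidableEq J]

lemma drawWeight_nonneg (y : Y) (j : J) : 0 ≤ drawWeight c t y j := by
  unfold drawWeight
  split_ifs <;> positivity

lemma sum_drawWeight_mul {y : Y} (hy : t ≤ #(labelClass c y)) (f : J → ℝ) :
    ∑ j, drawWeight c t y j * f j = (#(labelClass c y) : ℝ)⁻¹ * ∑ j ∈ labelClass c y, f j := by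
  simp [drawWeight, hy, mul_sum]

lemma sum_drawWeight [Nonempty J] (ht : 0 < t) (y : Y) : ∑ j, drawWeight c t y j = 1 := by
  by_cases hy : t ≤ #(labelClass c y)
  · have hne : (#(labelClass c y) : ℝ) ≠ 0 := by exact_mod_cast (ht.trans_le hy).ne'
    simpa [hne] using sum_drawWeight_mul hy fun _ => 1
  · simp [drawWeight, hy]

lemma mem_labelClass_of_prod_drawWeight_ne_zero [Fintype Y] {σ : Y → Fin t → J}
    (h : ∏ y, ∏ l, drawWeight c t y (σ y l) ≠ 0) (y : Y) (l : Fin t)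
    (hy : t ≤ #(labelClass c y)) : σ y l ∈ labelClass c y := by
  by_contra hmem
  exact h (prod_eq_zero (mem_univ y) (prod_eq_zero (mem_univ l) (by simp [drawWeight, hy, hmem])))

end DrawWeight

variable [DecidableEq β] (a : J → β) (ip : X → Y → β) (α : Y → ℝ)

lemma estimatedCost_sampledFamily [Fintype Y] (σ : Y → Fin t → J) (x : X) :
    estimatedCost a ip α (sampledFamily c t σ) x =
      ∑ y, if t ≤ #(labelClass c y) then α y / t * ∑ l, mismatch a (ip x y) (σ y l)
        else α y / #(labelClass c y) * mismatchCount (labelClass c y) a (ip x y) := by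
  refine sum_congr rfl fun y _ => ?_
  rcases le_or_gt t #(labelClass c y) with h | h
  · rw [sampledFamily, if_neg h.not_gt, if_pos h, Multiset.filter_map, Multiset.card_map,
      Multiset.card_map, card_val, card_univ, Fintype.card_fin]
    simp only [mismatch, sum_boole]
    rfl
  · rw [sampledFamily, if_pos h, if_neg h.not_ge]
    rfl

lemma estimatedCost_sub_estimatedCost [Fintype Y] (ht : 0 < t) (σ : Y → Fin t → J) (x x' : X) :
    estimatedCost a ip α (sampledFamily c t σ) x - estimatedCost a ip α (sampledFamily c t σ) x' =
      ∑ y, α y / #(labelClass c y) * ((mismatchCount (labelClass c y) a (ip x y) : ℝ) -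
        mismatchCount (labelClass c y) a (ip x' y)) +
      ∑ y, ∑ l, drawDeviation a ip c α t x x' y (σ y l) := by
  rw [estimatedCost_sampledFamily, estimatedCost_sampledFamily, ← sum_sub_distrib,
    ← sum_add_distrib]
  refine sum_congr rfl fun y _ => ?_
  unfold drawDeviation
  split_ifs with hy
  · simp only [← mul_sum, sum_sub_distrib, sum_const, card_univ, Fintype.card_fin, nsmul_eq_mul]
    field_simp
    ring
  · simp only [sum_const_zero, add_zero, mul_sub]

lemma sum_drawWeight_mul_drawDeviation [DecidableEq J] (ht : 0 < t) (x x' : X) (y : Y) :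
    ∑ j, drawWeight c t y j * drawDeviation a ip c α t x x' y j = 0 := by
  by_cases hy : t ≤ #(labelClass c y)
  · have hne : (#(labelClass c y) : ℝ) ≠ 0 := by exact_mod_cast (ht.trans_le hy).ne'
    rw [sum_drawWeight_mul hy]
    simp only [drawDeviation, if_pos hy, ← mul_sum, sum_sub_distrib, sum_mismatch, sum_const,
      nsmul_eq_mul, mul_div_cancel₀ _ hne, sub_self, mul_zero]
  · simp [drawDeviation, hy]

variable {a ip α}

lemma mul_sum_drawWeight_mul_drawDeviation_sq_le [DecidableEq J] (ht : 0 < t) {δ : ℝ} {y : Y}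
    (hα0 : 0 ≤ α y) (hα : α y ≤ (1 + δ) * #(labelClass c y)) (x x' : X) :
    t * ∑ j, drawWeight c t y j * drawDeviation a ip c α t x x' y j ^ 2 ≤
      4 * (1 + δ) ^ 2 / t * (mismatchCount (labelClass c y) a (ip x y) +
        mismatchCount (labelClass c y) a (ip x' y)) *
          mismatchCount (labelClass c y) a (ip x' y) := by
  by_cases hy : t ≤ #(labelClass c y)
  swap
  · simp only [drawDeviation, if_neg hy, ne_eq, OfNat.ofNat_ne_zero, not_false_eq_true, zero_pow,
      mul_zero, sum_const_zero]
    positivity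
  have variance := card_mul_sum_sq_mismatch_deviation_le (labelClass c y) a (ip x y) (ip x' y)
  rw [sum_drawWeight_mul hy]
  simp only [drawDeviation, if_pos hy, mul_pow, ← mul_sum]
  set N : ℝ := (#(labelClass c y) : ℝ)
  have hN : 0 < N := by simpa [N] using ht.trans_le hy
  have ht' : (0 : ℝ) < t := by exact_mod_cast ht
  have hratio : (α y / N) ^ 2 ≤ (1 + δ) ^ 2 := by
    gcongr
    exact (div_le_iff₀ hN).2 hα
  set Q := ∑ j ∈ labelClass c y, (mismatch a (ip x y) j - mismatch a (ip x' y) j -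
    ((mismatchCount (labelClass c y) a (ip x y) : ℝ) -
      mismatchCount (labelClass c y) a (ip x' y)) / N) ^ 2
  calc (t : ℝ) * (N⁻¹ * ((α y / t) ^ 2 * Q)) = (α y / N) ^ 2 / t * (N * Q) := by field_simp
    _ ≤ (1 + δ) ^ 2 / t * (4 * (mismatchCount (labelClass c y) a (ip x y) +
          mismatchCount (labelClass c y) a (ip x' y)) *
            mismatchCount (labelClass c y) a (ip x' y)) := by gcongr
    _ = _ := by ring

lemma sum_prod_drawWeight_mul_sum_drawDeviation_sq_le [Fintype Y] [DecidableEq J] [Nonempty J]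
    (ht : 0 < t) {δ : ℝ}
    (hα : ∀ y, #(labelClass c y) ≤ α y ∧ α y ≤ (1 + δ) * #(labelClass c y)) (x x' : X) :
    ∑ σ : Y → Fin t → J, (∏ y, ∏ l, drawWeight c t y (σ y l)) *
        (∑ y, ∑ l, drawDeviation a ip c α t x x' y (σ y l)) ^ 2 ≤
      4 * (1 + δ) ^ 2 / t * (rowCost a ip c x + rowCost a ip c x') * rowCost a ip c x' := by
  rw [sum_prod_prod_mul_sum_sum_sq (sum_drawWeight ht)
    (sum_drawWeight_mul_drawDeviation a ip α ht x x'), Fintype.card_fin]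
  calc _ ≤ ∑ y, 4 * (1 + δ) ^ 2 / t * (mismatchCount (labelClass c y) a (ip x y) +
          mismatchCount (labelClass c y) a (ip x' y)) *
            mismatchCount (labelClass c y) a (ip x' y) :=
        sum_le_sum fun y _ => mul_sum_drawWeight_mul_drawDeviation_sq_le ht
          ((Nat.cast_nonneg _).trans (hα y).1) (hα y).2 x x'
    _ ≤ ∑ y, 4 * (1 + δ) ^ 2 / t * (rowCost a ip c x + rowCost a ip c x') *
          mismatchCount (labelClass c y) a (ip x' y) := by
        gcongr <;> exact mismatchCount_labelClass_le_rowCost a ip c _ _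
    _ = _ := by rw [← mul_sum, rowCost_eq_sum_mismatchCount a ip c x', Nat.cast_sum]

lemma sum_prod_drawWeight_mul_rowCost_le [Fintype X] [Fintype Y] [DecidableEq J] {ε : ℝ}
    (hε0 : 0 < ε) (hε1 : ε ≤ 1) (ht : 25 * Fintype.card X / ε ^ 2 ≤ t)
    (hα : ∀ y, #(labelClass c y) ≤ α y ∧ α y ≤ (1 + ε / 6) * #(labelClass c y))
    {u : (Y → Fin t → J) → X} {x' : X}
    (hu : ∀ σ : Y → Fin t → J, (∀ y l, t ≤ #(labelClass c y) → σ y l ∈ labelClass c y) →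
      estimatedCost a ip α (sampledFamily c t σ) (u σ) ≤
        estimatedCost a ip α (sampledFamily c t σ) x') :
    ∑ σ : Y → Fin t → J, (∏ y, ∏ l, drawWeight c t y (σ y l)) * rowCost a ip c (u σ) ≤
      (1 + ε) * rowCost a ip c x' := by
  rcases isEmpty_or_nonempty J with hJ | hJ
  · simp [rowCost]
  have hX : (0 : ℝ) < Fintype.card X := by exact_mod_cast Fintype.card_pos_iff.2 ⟨x'⟩
  have ht' : (0 : ℝ) < t := lt_of_lt_of_le (by positivity) ht
  have ht0 : 0 < t := by exact_mod_cast ht'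
  have minimizer (σ : Y → Fin t → J) (hσ : ∏ y, ∏ l, drawWeight c t y (σ y l) ≠ 0) :
      rowCost a ip c (u σ) + ∑ y, ∑ l, drawDeviation a ip c α t (u σ) x' y (σ y l) ≤
        (1 + ε / 6) * rowCost a ip c x' := by
    linarith [hu σ (mem_labelClass_of_prod_drawWeight_ne_zero hσ),
      estimatedCost_sub_estimatedCost (c := c) a ip α ht0 σ (u σ) x',
      rowCost_sub_le_sum a ip c hα (u σ) x']
  have excess := sum_weight_mul_minimizer_le (θ := ε / 3)
    (fun σ => prod_nonneg fun y _ => prod_nonneg fun l _ => drawWeight_nonneg y (σ y l))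
    (sum_prod_prod_eq_one (sum_drawWeight ht0)) (fun x => Nat.cast_nonneg (rowCost a ip c x))
    (Nat.cast_nonneg (rowCost a ip c x')) (by positivity) (by positivity)
    (fun x => sum_prod_drawWeight_mul_sum_drawDeviation_sq_le ht0 hα x x') minimizer
  -- `θ = ε / 3` leaves `ε / 3` for the noise term, which is at most `(49 / 6) * (ε / 25)`.
  have factor : ε / 6 + ε / 3 + Fintype.card X * (4 * (1 + ε / 6) ^ 2 / t / (2 * (ε / 3))) ≤
      (1 - ε / 3 / 2) * ε := by
    have hcard : Fintype.card X / (t * ε) ≤ ε / 25 := by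
      rw [div_le_iff₀ (by positivity)] at ht ⊢
      linarith
    have hsq : (1 + ε / 6) ^ 2 ≤ 49 / 36 := by nlinarith
    calc _ = ε / 2 + 6 * (1 + ε / 6) ^ 2 * (Fintype.card X / (t * ε)) := by field_simp; ring
      _ ≤ ε / 2 + 6 * (49 / 36) * (ε / 25) := by gcongr
      _ ≤ (1 - ε / 3 / 2) * ε := by nlinarith
  have scaled := excess.trans (mul_le_mul_of_nonneg_right factor (Nat.cast_nonneg _))
  rw [mul_assoc] at scaled
  linarith [le_of_mul_le_mul_left scaled (by linarith)]

end Sampling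

theorem stmt19_general [Fintype I] [Fintype X] [Fintype Y] [DecidableEq J] [DecidableEq β]
    (A : I → J → β) (ip : X → Y → β) (c : J → Y) {ε : ℝ} (hε0 : 0 < ε) (hε1 : ε ≤ 1) {t : ℕ}
    (ht : 25 * Fintype.card X / ε ^ 2 ≤ t) {α : Y → ℝ}
    (hα : ∀ y, #(labelClass c y) ≤ α y ∧ α y ≤ (1 + ε / 6) * #(labelClass c y))
    {u : (Y → Fin t → J) → I → X}
    (hu : ∀ σ : Y → Fin t → J, (∀ y l, t ≤ #(labelClass c y) → σ y l ∈ labelClass c y) →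
      ∀ i x, estimatedCost (A i) ip α (sampledFamily c t σ) (u σ i) ≤
        estimatedCost (A i) ip α (sampledFamily c t σ) x)
    (U : I → X) :
    ∑ σ : Y → Fin t → J,
        (∏ y, ∏ l, drawWeight c t y (σ y l)) * ∑ i, (rowCost (A i) ip c (u σ i) : ℝ) ≤
      (1 + ε) * ∑ i, (rowCost (A i) ip c (U i) : ℝ) := by
  simp_rw [mul_sum]
  rw [sum_comm]
  exact sum_le_sum fun i _ =>
    sum_prod_drawWeight_mul_rowCost_le hε0 hε1 ht hα fun σ hσ => hu σ hσ i (U i)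

end Clusters

section BinaryMatrices

lemma le_and_le_of_approxSize {N α t : ℕ} {δ : ℝ} (hδ : 0 ≤ δ) (hsmall : N < t → α = N)
    (hlarge : t ≤ N → N ≤ α ∧ (α : ℝ) ≤ (1 + δ) * N) :
    (N : ℝ) ≤ α ∧ (α : ℝ) ≤ (1 + δ) * N := by
  rcases lt_or_ge N t with h | h
  · rw [hsmall h]
    exact ⟨le_rfl, le_mul_of_one_le_left (Nat.cast_nonneg N) (by linarith)⟩
  · exact ⟨by exact_mod_cast (hlarge h).1, (hlarge h).2⟩

lemma card_binary_vectors_mul_le (k : ℕ) :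
    25 * (Fintype.card (Fin k → Fin 2) : ℝ) ≤ 2 ^ (4 * k + 14) := by
  calc 25 * (Fintype.card (Fin k → Fin 2) : ℝ) = 25 * 2 ^ k := by simp
    _ ≤ 2 ^ 14 * 2 ^ (4 * k) := by
        gcongr
        · norm_num
        · norm_num
        · omega
    _ = 2 ^ (4 * k + 14) := by ring

variable {n d k : ℕ}

lemma costUV_eq_sum_rowCost (A : Fin n → Fin d → Fin 2)
    (ip : (Fin k → Fin 2) → (Fin k → Fin 2) → ℝ) (U : Fin n → Fin k → Fin 2)
    (V : Fin k → Fin d → Fin 2) :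
    (costUV A ip U V : ℝ) = ∑ i, (rowCost (fun j => ((A i j : ℕ) : ℝ)) ip (colOf V) (U i) : ℝ) := by
  simp_rw [costUV, rowCost, Nat.card_eq_fintype_card, Fintype.card_subtype, card_filter,
    Fintype.sum_prod_type]
  push_cast
  rfl

lemma exists_optV_eq_costUV (A : Fin n → Fin d → Fin 2)
    (ip : (Fin k → Fin 2) → (Fin k → Fin 2) → ℝ) (V : Fin k → Fin d → Fin 2) :
    ∃ U, optV A ip V = costUV A ip U V :=
  Nat.sInf_mem (s := {m | ∃ U, m = costUV A ip U V}) ⟨_, fun _ _ => 0, rfl⟩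

lemma sampleWeight_eq_prod_drawWeight (V : Fin k → Fin d → Fin 2) (t : ℕ)
    (σ : (Fin k → Fin 2) → Fin t → Fin d) :
    sampleWeight V t σ = ∏ y, ∏ l, drawWeight (colOf V) t y (σ y l) := by
  simp only [sampleWeight, drawWeight, Fintype.card_fin]
  rfl

end BinaryMatrices

/-- The sampling theorem: for `t ≥ 2^{4k+14}/ε²`, `(ε/6)`-approximate
cluster sizes `α`, and `C̃` drawn from `D(V,t)`, any matrix `Ũ(C̃)` whose rows minimize
the estimated cost satisfies `E[‖A − Ũ(C̃)·V‖₀] ≤ (1+ε)·OPT_k^V`. -/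
theorem stmt19 {n d k : ℕ} (hk : 1 ≤ k) (A : Fin n → Fin d → Fin 2)
    (ip : (Fin k → Fin 2) → (Fin k → Fin 2) → ℝ)
    (V : Fin k → Fin d → Fin 2)
    (ε : ℝ) (hε0 : 0 < ε) (hε1 : ε < 1) (t : ℕ)
    (ht : (2 : ℝ) ^ (4 * k + 14) / ε ^ 2 ≤ (t : ℝ))
    (α : (Fin k → Fin 2) → ℕ)
    (hα : ∀ y : Fin k → Fin 2,
      ((cluster V y).card < t → α y = (cluster V y).card) ∧
      (t ≤ (cluster V y).card →
        (cluster V y).card ≤ α y ∧ (α y : ℝ) ≤ (1 + ε / 6) * ((cluster V y).card : ℝ)))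
    (Ut : ((Fin k → Fin 2) → Multiset (Fin d)) → Fin n → Fin k → Fin 2)
    (hUt : ∀ σ : (Fin k → Fin 2) → Fin t → Fin d,
      (∀ y l, t ≤ (cluster V y).card → σ y l ∈ cluster V y) →
      ∀ (i : Fin n) (x : Fin k → Fin 2),
        estCost A ip α (sampleFam V t σ) i (Ut (sampleFam V t σ) i) ≤
          estCost A ip α (sampleFam V t σ) i x) :
    ∑ σ : (Fin k → Fin 2) → Fin t → Fin d,
        sampleWeight V t σ * (costUV A ip (Ut (sampleFam V t σ)) V : ℝ) ≤
      (1 + ε) * (optV A ip V : ℝ) := by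
  obtain ⟨U, hU⟩ := exists_optV_eq_costUV A ip V
  simp only [hU, costUV_eq_sum_rowCost, sampleWeight_eq_prod_drawWeight]
  exact stmt19_general (fun i j => ((A i j : ℕ) : ℝ)) ip (colOf V) hε0 hε1.le
    ((div_le_div_of_nonneg_right (card_binary_vectors_mul_le k) (sq_nonneg ε)).trans ht)
    (fun y => le_and_le_of_approxSize (by positivity) (hα y).1 (hα y).2) hUt U
end
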